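/- Let G be a parity game, let P be one of the two players, and let A ⊆ V be a P-dominion in G such that every vertex of V \ A has at least one successor in V \ A (so the subgame G \ A is well defined). If C is a P-dominion in the subgame G \ A, then A ∪ C is a P-dominion in G. -/

import Mathlib

/-!
The player `P` wins from `v ∈ A ∪ C` by playing as in `C` for as long as the play has not
visited `A`, and, from the first visit to `A` on, by forgetting the history before that visit
and following the winning strategy in `A` from the entry vertex. The set `A` is closed under
all plays agreeing with this strategy. Hence such a play either avoids `A` forever, and then
it is a play of `C` won by the strategy for `C`, or it has a tail that is a play of `A` won by
the strategy for `A`; in that case it is won itself, since the winner of a play depends only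
on any of its tails (`WinsPlay.of_shift`).
-/

/-- The two players of a parity game. -/
inductive Player where
  | even : Player
  | odd : Player
deriving DecidableEq

/-- The opponent of a player. -/
def Player.opp : Player → Player
  | even => odd
  | odd => even

/-- A natural number has the parity of the given player. -/
def Player.matchesPriority : Player → ℕ → Prop
  | even => fun p => Even p
  | odd => fun p => Odd p

/-- A parity game on a vertex type `V`: an ownership function, an edge relation in which
every vertex has at least one successor, and a priority function. -/
structure ParityGame (V : Type*) where
  owner : V → Player
  edge : V → V → Prop
  priority : V → ℕ
  succ_nonempty : ∀ v, ∃ w, edge v w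

namespace ParityGame

variable {V : Type*} (G : ParityGame V)

/-- A play is an infinite sequence of vertices following edges. -/
def IsPlay (π : ℕ → V) : Prop := ∀ i, G.edge (π i) (π (i + 1))

/-- Priority `p` occurs infinitely often along the play `π`. -/
def InfOften (π : ℕ → V) (p : ℕ) : Prop := ∀ N, ∃ i, N ≤ i ∧ G.priority (π i) = p

/-- A play is winning for a player if the highest priority occurring infinitely often
along it has that player's parity. -/
def WinsPlay (P : Player) (π : ℕ → V) : Prop :=
  ∃ p, G.InfOften π p ∧ (∀ q, G.InfOften π q → q ≤ p) ∧ P.matchesPriority p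

/-- A play `π` agrees with the strategy `σ` of player `P` (a strategy maps a history
together with the current vertex to the next vertex). -/
def Agrees (P : Player) (σ : List V → V → V) (π : ℕ → V) : Prop :=
  ∀ i, G.owner (π i) = P → π (i + 1) = σ (List.ofFn fun j : Fin i => π j) (π i)

/-- `σ` is a valid strategy for player `P`: at `P`'s vertices it prescribes a successor. -/
def ValidFor (P : Player) (σ : List V → V → V) : Prop :=
  ∀ hist v, G.owner v = P → G.edge v (σ hist v)

/-- Player `P` has a winning strategy from vertex `v`. -/
def WinsFrom (P : Player) (v : V) : Prop :=
  ∃ σ, G.ValidFor P σ ∧ ∀ π, π 0 = v → G.IsPlay π → G.Agrees P σ π → G.WinsPlay P π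

/-- The winning region of player `P`. -/
def winningRegion (P : Player) : Set V := {v | G.WinsFrom P v}

/-- Player `P` has a winning strategy from `v` in the subgame induced by the set `D`:
a strategy that at `P`'s vertices of `D` prescribes successors inside `D` and wins
every play that starts at `v`, stays in `D` and agrees with it. -/
def WinsWithinFrom (P : Player) (D : Set V) (v : V) : Prop :=
  ∃ σ : List V → V → V,
    (∀ hist w, w ∈ D → G.owner w = P → σ hist w ∈ D ∧ G.edge w (σ hist w)) ∧
    ∀ π, π 0 = v → G.IsPlay π → (∀ i, π i ∈ D) → G.Agrees P σ π → G.WinsPlay P π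

/-- `D` is a dominion for player `P` in the subgame of `G` induced by the vertex set `U`:
`D ⊆ U`, every `P`-vertex of `D` has a successor in `D`, every opponent vertex of `D`
has all of its successors (within the subgame) in `D`, and `P` wins from every vertex
of `D` in the subgame induced by `D`. -/
def IsDominionIn (P : Player) (U D : Set V) : Prop :=
  D ⊆ U ∧
  (∀ v ∈ D, G.owner v = P → ∃ w ∈ D, G.edge v w) ∧
  (∀ v ∈ D, G.owner v ≠ P → ∀ w ∈ U, G.edge v w → w ∈ D) ∧
  ∀ v ∈ D, G.WinsWithinFrom P D v

/-- `D` is a dominion for player `P` in `G`. -/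
def IsDominion (P : Player) (D : Set V) : Prop := G.IsDominionIn P Set.univ D

/-- The attractor for player `P` of the set `X`, computed in the subgame of `G` induced
by the vertex set `U`: the least set containing `X` such that a `P`-vertex with some
successor in it belongs to it, and an opponent vertex all of whose successors (within
the subgame) are in it belongs to it. -/
inductive AttrIn (P : Player) (U X : Set V) : V → Prop
  | base {v} : v ∈ X → AttrIn P U X v
  | player {v w} : v ∈ U → G.owner v = P → w ∈ U → G.edge v w → AttrIn P U X w →
      AttrIn P U X v
  | opponent {v} : v ∈ U → G.owner v ≠ P → (∀ w ∈ U, G.edge v w → AttrIn P U X w) →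
      AttrIn P U X v

/-- The attractor, within subgame `U`, as a set. -/
def attrIn (P : Player) (U X : Set V) : Set V := {v | G.AttrIn P U X v}

/-- The attractor `Attr_P(X, G)` for player `P` of the set `X` in the whole game `G`. -/
def attractor (P : Player) (X : Set V) : Set V := G.attrIn P Set.univ X

/-- `T` is a trap for player `P`: every `P`-vertex of `T` has all of its successors in
`T`, and every opponent vertex of `T` has at least one successor in `T`. -/
def IsTrap (P : Player) (T : Set V) : Prop :=
  (∀ v ∈ T, G.owner v = P → ∀ w, G.edge v w → w ∈ T) ∧
  (∀ v ∈ T, G.owner v ≠ P → ∃ w ∈ T, G.edge v w)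

end ParityGame

namespace ParityGame

variable {V : Type*} {G : ParityGame V}

theorem infOften_shift_iff (π : ℕ → V) (n p : ℕ) :
    G.InfOften (fun k => π (n + k)) p ↔ G.InfOften π p := by
  constructor
  · intro h N
    obtain ⟨i, hi, hp⟩ := h N
    exact ⟨n + i, by omega, hp⟩
  · intro h N
    obtain ⟨i, hi, hp⟩ := h (n + N)
    refine ⟨i - n, by omega, ?_⟩
    have : n + (i - n) = i := by omega
    simpa only [this] using hp

/-- Winning a tail of a play is winning the play. -/
theorem WinsPlay.of_shift {P : Player} {π : ℕ → V} {n : ℕ}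
    (h : G.WinsPlay P (fun k => π (n + k))) : G.WinsPlay P π := by
  simpa only [WinsPlay, infOften_shift_iff] using h

/-- In a dominion, `WinsWithinFrom` holds from every vertex whatsoever: from vertices outside
`D` no play stays in `D`, so any strategy that respects `D` will do. -/
theorem IsDominionIn.winsWithinFrom {P : Player} {U D : Set V} (h : G.IsDominionIn P U D)
    (v : V) : G.WinsWithinFrom P D v := by
  classical
  by_cases hv : v ∈ D
  · exact h.2.2.2 v hv
  · have h2 : ∀ w, ∃ u, w ∈ D → G.owner w = P → u ∈ D ∧ G.edge w u := by
      intro w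
      by_cases hw : w ∈ D ∧ G.owner w = P
      · obtain ⟨u, hu⟩ := h.2.1 w hw.1 hw.2
        exact ⟨u, fun _ _ => hu⟩
      · exact ⟨w, fun h1 h2 => (hw ⟨h1, h2⟩).elim⟩
    choose f hf using h2
    exact ⟨fun _ w => f w, fun _ w => hf w, fun π h0 _ hD _ => (hv (h0 ▸ hD 0)).elim⟩

open Classical in
/-- The part of the history `hist` from its first vertex in `A` on. -/
noncomputable def sinceEntry (A : Set V) (hist : List V) : List V :=
  hist.dropWhile fun x => decide (x ∉ A)

open Classical in
/-- Play `σC` outside `A`, and inside `A` play `σA s`, where `s` is the first vertex of `A` in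
the history (the current vertex if there is none), as if the play had started at `s`. -/
noncomputable def switchStrategy (A : Set V) (σA : V → List V → V → V) (σC : List V → V → V)
    (hist : List V) (w : V) : V :=
  if w ∈ A then σA ((sinceEntry A hist).headD w) (sinceEntry A hist) w else σC hist w

theorem sinceEntry_ofFn {A : Set V} {π : ℕ → V} {n : ℕ} (hlt : ∀ i < n, π i ∉ A)
    (hn : π n ∈ A) (k : ℕ) :
    sinceEntry A (List.ofFn fun j : Fin (n + k) => π j) =
      List.ofFn fun j : Fin k => π (n + j) := by
  have hsplit : (List.ofFn fun j : Fin (n + k) => π j) =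
      (List.ofFn fun j : Fin n => π j) ++ List.ofFn fun j : Fin k => π (n + j) := by
    rw [List.ofFn_add]; rfl
  rw [sinceEntry, hsplit, List.dropWhile_append_of_pos]
  · cases k with
    | zero => simp
    | succ k => simp [List.ofFn_succ, hn]
  · intro a ha
    obtain ⟨j, rfl⟩ := (List.mem_ofFn' _ _).1 ha
    simpa using hlt j j.2

theorem headD_ofFn_shift (π : ℕ → V) (n k : ℕ) :
    (List.ofFn fun j : Fin k => π (n + j)).headD (π (n + k)) = π n := by
  cases k <;> simp [List.ofFn_succ]

end ParityGame

/-- If `A` is a `P`-dominion in `G` whose complement induces a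
well-defined subgame, and `C` is a `P`-dominion in the subgame `G \\ A`, then `A ∪ C`
is a `P`-dominion in `G`. -/
theorem dominion_union_subgame_dominion {V : Type*} [Finite V] (G : ParityGame V)
    (P : Player) (A C : Set V) (hA : G.IsDominion P A)
    (hsucc : ∀ v ∈ Aᶜ, ∃ w ∈ Aᶜ, G.edge v w)
    (hC : G.IsDominionIn P Aᶜ C) :
    G.IsDominion P (A ∪ C) := by
  classical
  obtain ⟨-, -, hAopp, -⟩ := id hA
  obtain ⟨hCA, -, hCopp, -⟩ := id hC
  refine ⟨Set.subset_univ _, ?_, ?_, ?_⟩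
  · rintro v (hv | hv) ho
    · obtain ⟨w, hw, e⟩ := hA.2.1 v hv ho
      exact ⟨w, Or.inl hw, e⟩
    · obtain ⟨w, hw, e⟩ := hC.2.1 v hv ho
      exact ⟨w, Or.inr hw, e⟩
  · rintro v (hv | hv) ho w - e
    · exact Or.inl (hAopp v hv ho w trivial e)
    · by_cases hw : w ∈ A
      · exact Or.inl hw
      · exact Or.inr (hCopp v hv ho w hw e)
  · intro v _
    choose σA hσA winA using hA.winsWithinFrom
    obtain ⟨σC, hσC, winC⟩ := hC.winsWithinFrom v
    refine ⟨ParityGame.switchStrategy A σA σC, ?_, ?_⟩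
    · rintro hist w hw ho
      by_cases hwA : w ∈ A
      · rw [ParityGame.switchStrategy, if_pos hwA]
        exact (hσA _ _ w hwA ho).imp_left Or.inl
      · rw [ParityGame.switchStrategy, if_neg hwA]
        exact (hσC _ w (hw.resolve_left hwA) ho).imp_left Or.inr
    · intro π h0 hplay hD hag
      by_cases hex : ∃ n, π n ∈ A
      · have hn := Nat.find_spec hex
        have hlt : ∀ i < Nat.find hex, π i ∉ A := fun i hi => Nat.find_min hex hi
        generalize Nat.find hex = n at hn hlt
        have hstay : ∀ k, π (n + k) ∈ A := by
          intro k
          induction k with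
          | zero => exact hn
          | succ k ih =>
            by_cases ho : G.owner (π (n + k)) = P
            · have h := hag (n + k) ho
              rw [ParityGame.switchStrategy, if_pos ih] at h
              rw [← Nat.add_assoc, h]
              exact (hσA _ _ _ ih ho).1
            · exact hAopp _ ih ho _ trivial (hplay (n + k))
        refine ParityGame.WinsPlay.of_shift (n := n)
          (winA (π n) _ rfl (fun k => hplay (n + k)) hstay fun k ho => ?_)
        have h := hag (n + k) ho
        rwa [ParityGame.switchStrategy, if_pos (hstay k),
          ParityGame.sinceEntry_ofFn hlt hn, ParityGame.headD_ofFn_shift] at h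
      · have hnot : ∀ i, π i ∉ A := fun i hi => hex ⟨i, hi⟩
        refine winC π h0 hplay (fun i => (hD i).resolve_left (hnot i)) fun i ho => ?_
        have h := hag i ho
        rwa [ParityGame.switchStrategy, if_neg (hnot i)] at h
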